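/- Let A be a group acting 2-transitively on a set of size 280, viewed via the Galois action on roots: if the polynomial p(t)q(X) - p(X)q(t) over K(t) has an irreducible factor of degree 36 (other than X - t), then A is not 2-transitive; contrapositive: a 2-transitive Galois group forces (p(t)q(X) - p(X)q(t))/(X - t) to be irreducible. -/

import Mathlib

open Polynomial

/-!
Write `f = p/q`, and let `x` be a root of `F = p(X) - t q(X)`, i.e. a point of the fibre of `f`
above `t`. Since `f(x) = t` is transcendental over `K`, so is `x`, and `t ↦ x` embeds `K(t)` into
the splitting field of `F`, and this embedding turns `p(t) q(X) - p(X) q(t)` into a unit multiple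
of `F`. A factor of the former thus becomes a factor of `F` over `K(x)`, and its roots are
permuted by the stabilizer of `x`. If the Galois group is 2-transitive on the roots of `F`, this
stabilizer is transitive on the roots other than `x`, so a factor not vanishing at `t` has exactly
one distinct root fewer than `F`.

Since `p/q` may be inseparable, it is the numbers of distinct roots that are compared. For an
irreducible polynomial this number divides the degree, with quotient a power of the characteristic
exponent, whereas no `s` dividing 36 makes `280 / (s + 1)` a prime power.
-/

section FiberPoly

variable {K A B : Type*} [CommRing K] [CommRing A] [CommRing B] [Algebra K A] [Algebra K B]

/-- The polynomial `v p(X) - u q(X)`, whose roots form the fibre of the rational function `p/q`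
above the point `u/v`. Homogeneous coordinates `u, v` are used so that the fibre through `x` is
`fiberPoly p q (p(x)) (q(x))`, without division. -/
noncomputable def fiberPoly (p q : K[X]) (u v : A) : A[X] :=
  C v * p.map (algebraMap K A) - C u * q.map (algebraMap K A)

variable {p q : K[X]}

theorem eval_fiberPoly (u v x : A) :
    (fiberPoly p q u v).eval x = v * aeval x p - u * aeval x q := by
  simp [fiberPoly, aeval_def, eval_map]

theorem coeff_fiberPoly (u v : A) (n : ℕ) :
    (fiberPoly p q u v).coeff n =
      v * algebraMap K A (p.coeff n) - u * algebraMap K A (q.coeff n) := by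
  simp [fiberPoly]

theorem map_fiberPoly (φ : A →ₐ[K] B) (u v : A) :
    (fiberPoly p q u v).map (φ : A →+* B) = fiberPoly p q (φ u) (φ v) := by
  simp [fiberPoly, Polynomial.map_map, φ.comp_algebraMap]

theorem isRoot_fiberPoly_one {u x : A} :
    (fiberPoly p q u 1).IsRoot x ↔ aeval x p = u * aeval x q := by
  rw [IsRoot.def, eval_fiberPoly, one_mul, sub_eq_zero]

theorem fiberPoly_aeval_of_isRoot {u x : A} (hx : (fiberPoly p q u 1).IsRoot x) :
    fiberPoly p q (aeval x p) (aeval x q) = C (aeval x q) * fiberPoly p q u 1 := by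
  rw [isRoot_fiberPoly_one.mp hx]
  simp only [fiberPoly, C_mul, C_1]
  ring

theorem aeval_ne_zero_of_isRoot_fiberPoly [Nontrivial A] (hcop : IsCoprime p q) {u x : A}
    (hx : (fiberPoly p q u 1).IsRoot x) : aeval x q ≠ 0 := by
  intro hqx
  have hpx : aeval x p = 0 := by rw [isRoot_fiberPoly_one.mp hx, hqx, mul_zero]
  exact (aeval_ne_zero_of_isCoprime hcop x).elim (· hpx) (· hqx)

theorem map_dvd_fiberPoly_of_dvd {E : Type*} [Field E] [Algebra K E] (hcop : IsCoprime p q)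
    (φ : A →ₐ[K] E) {a : A} {u : E} (hroot : (fiberPoly p q u 1).IsRoot (φ a)) {g : A[X]}
    (hg : g ∣ fiberPoly p q (aeval a p) (aeval a q)) :
    g.map (φ : A →+* E) ∣ fiberPoly p q u 1 := by
  have hunit : IsUnit (C (aeval (φ a) q)) :=
    isUnit_C.mpr (aeval_ne_zero_of_isRoot_fiberPoly hcop hroot).isUnit
  have hmap := Polynomial.map_dvd (φ : A →+* E) hg
  rwa [map_fiberPoly, ← aeval_algHom_apply, ← aeval_algHom_apply,
    fiberPoly_aeval_of_isRoot hroot, hunit.dvd_mul_left] at hmap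

end FiberPoly

section Field

variable {K E : Type*} [Field K] [Field E] [Algebra K E] {p q : K[X]}

theorem transcendental_of_isRoot_fiberPoly (hcop : IsCoprime p q) {u x : E}
    (hu : Transcendental K u) (hx : (fiberPoly p q u 1).IsRoot x) : Transcendental K x := by
  intro hxalg
  have halg (r : K[X]) : IsAlgebraic K (aeval x r) :=
    not_not.mp fun hr ↦ (transcendental_aeval_iff.mp hr).1 hxalg
  have hu_eq : u = aeval x p * (aeval x q)⁻¹ :=
    (eq_mul_inv_iff_mul_eq₀ (aeval_ne_zero_of_isRoot_fiberPoly hcop hx)).mpr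
      (isRoot_fiberPoly_one.mp hx).symm
  exact hu (hu_eq ▸ (halg p).mul (halg q).inv)

theorem coeff_fiberPoly_one_eq_zero_iff {u : E} (hu : u ∉ Set.range (algebraMap K E)) {n : ℕ} :
    (fiberPoly p q u 1).coeff n = 0 ↔ p.coeff n = 0 ∧ q.coeff n = 0 := by
  refine ⟨fun h ↦ ?_, fun ⟨hp, hq⟩ ↦ by simp [coeff_fiberPoly, hp, hq]⟩
  rw [coeff_fiberPoly, one_mul, sub_eq_zero] at h
  have hq : q.coeff n = 0 := by
    by_contra hq
    refine hu ⟨p.coeff n / q.coeff n, ?_⟩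
    rw [map_div₀, h, mul_div_cancel_right₀ _ (by simpa using hq)]
  simpa [hq] using h

theorem natDegree_fiberPoly_one {u : E} (hu : u ∉ Set.range (algebraMap K E)) :
    (fiberPoly p q u 1).natDegree = max p.natDegree q.natDegree := by
  have hcoeff (n : ℕ) (h : (fiberPoly p q u 1).natDegree < n) : p.coeff n = 0 ∧ q.coeff n = 0 :=
    (coeff_fiberPoly_one_eq_zero_iff hu).mp (coeff_eq_zero_of_natDegree_lt h)
  refine le_antisymm ?_ (max_le ?_ ?_)
  · refine natDegree_le_iff_coeff_eq_zero.mpr fun n hn ↦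
      (coeff_fiberPoly_one_eq_zero_iff hu).mpr ⟨?_, ?_⟩
    · exact coeff_eq_zero_of_natDegree_lt (lt_of_le_of_lt (le_max_left _ _) hn)
    · exact coeff_eq_zero_of_natDegree_lt (lt_of_le_of_lt (le_max_right _ _) hn)
  · exact natDegree_le_iff_coeff_eq_zero.mpr fun n hn ↦ (hcoeff n hn).1
  · exact natDegree_le_iff_coeff_eq_zero.mpr fun n hn ↦ (hcoeff n hn).2

theorem natDegree_fiberPoly_one_of_transcendental {u : E} (hu : Transcendental K u) :
    (fiberPoly p q u 1).natDegree = max p.natDegree q.natDegree := by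
  refine natDegree_fiberPoly_one ?_
  rintro ⟨a, rfl⟩
  exact hu (isAlgebraic_algebraMap a)

end Field

section GenericFiber

variable {K : Type*} [Field K] {p q : K[X]}

-- `p(X) - t q(X)` is linear in `t`: exchange the two variables.
theorem irreducible_fiberPoly_polynomialX (hq : q ≠ 0) (hcop : IsCoprime p q) :
    Irreducible (fiberPoly p q (X : K[X]) 1) := by
  have hlin : Irreducible (C (-q) * X + C p : K[X][X]) :=
    irreducible_C_mul_X_add_C (neg_ne_zero.mpr hq) hcop.symm.neg_left.isRelPrime
  have hswap : fiberPoly p q (X : K[X]) 1 = Bivariate.swap (C (-q) * X + C p) := by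
    rw [map_add, map_mul, Bivariate.swap_Y, Bivariate.swap_C, Bivariate.swap_C,
      Polynomial.map_neg, fiberPoly, algebraMap_eq]
    simp only [C_1]
    ring
  rw [hswap]
  exact (MulEquiv.irreducible_iff (Bivariate.swap (R := K)).toMulEquiv).mpr hlin

theorem irreducible_fiberPoly_ratFuncX (hcop : IsCoprime p q)
    (hdeg : max p.natDegree q.natDegree ≠ 0) :
    Irreducible (fiberPoly p q (RatFunc.X : RatFunc K) 1) := by
  have hq : q ≠ 0 := by
    rintro rfl
    simp [natDegree_eq_zero_of_isUnit (isCoprime_zero_right.mp hcop)] at hdeg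
  have hmap : (fiberPoly p q (X : K[X]) 1).map (algebraMap K[X] (RatFunc K)) =
      fiberPoly p q RatFunc.X 1 := by
    simpa using map_fiberPoly (p := p) (q := q) (IsScalarTower.toAlgHom K K[X] (RatFunc K)) X 1
  have hirr := irreducible_fiberPoly_polynomialX hq hcop
  have hprim : (fiberPoly p q (X : K[X]) 1).IsPrimitive := by
    refine hirr.isPrimitive ?_
    rwa [← natDegree_map_eq_of_injective (RatFunc.algebraMap_injective K), hmap,
      natDegree_fiberPoly_one_of_transcendental RatFunc.transcendental_X]
  exact hmap ▸ (hprim.irreducible_iff_irreducible_map_fraction_map).mp hirr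

end GenericFiber

theorem exists_ratFunc_algHom_X_eq {K L : Type*} [Field K] [Field L] [Algebra K L] {x : L}
    (hx : Transcendental K x) : ∃ φ : RatFunc K →ₐ[K] L, φ RatFunc.X = x :=
  ⟨(IntermediateField.val _).comp (RatFunc.algEquivOfTranscendental x hx).toAlgHom,
    RatFunc.algEquivOfTranscendental_X x hx⟩

theorem ratFunc_algHom_ext {K B : Type*} [Field K] [Semiring B] [Algebra K B]
    {φ ψ : RatFunc K →ₐ[K] B} (h : φ RatFunc.X = ψ RatFunc.X) : φ = ψ :=
  IsLocalization.algHom_ext (nonZeroDivisors K[X]) <| Polynomial.algHom_ext <| by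
    simpa [Algebra.algHom] using h

theorem natSepDegree_add_one_of_transitive {L : Type*} [Field L] {f h : L[X]} {x : L}
    (hf : f ≠ 0) (hsplits : f.Splits) (hdvd : h ∣ f) (hdeg : h.natDegree ≠ 0)
    (hxf : f.IsRoot x) (hxh : ¬ h.IsRoot x)
    (htrans : ∀ y z, f.IsRoot y → f.IsRoot z → y ≠ x → z ≠ x →
      ∃ σ : L →+* L, h.map σ = h ∧ σ y = z) :
    h.natSepDegree + 1 = f.natSepDegree := by
  classical
  have hh : h ≠ 0 := ne_zero_of_dvd_ne_zero hf hdvd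
  have hhsplits : h.Splits := hsplits.of_dvd hf hdvd
  have hcard (r : L[X]) (hr : r.Splits) : r.natSepDegree = r.roots.toFinset.card := by
    simpa [aroots_def] using natSepDegree_eq_of_splits (E := L) r (by simpa using hr)
  obtain ⟨y, hy⟩ : ∃ y, h.IsRoot y :=
    hhsplits.exists_eval_eq_zero fun h0 ↦ hdeg (natDegree_eq_of_degree_eq_some h0)
  have hroots : h.roots.toFinset = f.roots.toFinset.erase x := by
    ext z
    simp only [Finset.mem_erase, Multiset.mem_toFinset, mem_roots hh, mem_roots hf]
    refine ⟨fun hz ↦ ⟨fun hzx ↦ hxh (hzx ▸ hz), hz.dvd hdvd⟩, fun ⟨hzx, hz⟩ ↦ ?_⟩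
    obtain ⟨σ, hσh, rfl⟩ := htrans y z (hy.dvd hdvd) hz (fun hyx ↦ hxh (hyx ▸ hy)) hzx
    exact hσh ▸ hy.map
  rw [hcard h hhsplits, hcard f hsplits, hroots, Finset.card_erase_add_one]
  simpa [hf] using hxf

theorem exists_gal_of_two_transitive {k : Type*} [Field k] {F : k[X]}
    (h2 : MulAction.IsMultiplyPretransitive F.Gal (F.rootSet F.SplittingField) 2)
    {x y z : F.SplittingField} (hx : x ∈ F.rootSet F.SplittingField)
    (hy : y ∈ F.rootSet F.SplittingField) (hz : z ∈ F.rootSet F.SplittingField)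
    (hyx : y ≠ x) (hzx : z ≠ x) : ∃ σ : F.Gal, σ x = x ∧ σ y = z := by
  have hyx' : (⟨x, hx⟩ : F.rootSet F.SplittingField) ≠ ⟨y, hy⟩ := by simpa using hyx.symm
  have hzx' : (⟨x, hx⟩ : F.rootSet F.SplittingField) ≠ ⟨z, hz⟩ := by simpa using hzx.symm
  obtain ⟨σ, hσx, hσy⟩ := MulAction.is_two_pretransitive_iff.mp h2 hyx' hzx'
  exact ⟨σ, congrArg Subtype.val hσx, congrArg Subtype.val hσy⟩

section TwoTransitive

variable {K : Type*} [Field K] {p q : K[X]}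

theorem natSepDegree_add_one_of_stabilizer_transitive {L : Type*} [Field L] [Algebra K L]
    (hcop : IsCoprime p q) (φ : RatFunc K →ₐ[K] L) {u : L} (hne : fiberPoly p q u 1 ≠ 0)
    (hsplits : (fiberPoly p q u 1).Splits)
    (hroot : (fiberPoly p q u 1).IsRoot (φ RatFunc.X))
    (htrans : ∀ y z, (fiberPoly p q u 1).IsRoot y → (fiberPoly p q u 1).IsRoot z →
      y ≠ φ RatFunc.X → z ≠ φ RatFunc.X → ∃ σ : L →ₐ[K] L, σ (φ RatFunc.X) = φ RatFunc.X ∧ σ y = z)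
    {g : (RatFunc K)[X]} (hg : g.natDegree ≠ 0) (hgX : ¬ g.IsRoot RatFunc.X)
    (hgdvd : g ∣ fiberPoly p q (aeval RatFunc.X p) (aeval RatFunc.X q)) :
    g.natSepDegree + 1 = (fiberPoly p q u 1).natSepDegree := by
  rw [← natSepDegree_map _ g (φ : RatFunc K →+* L)]
  refine natSepDegree_add_one_of_transitive hne hsplits
    (map_dvd_fiberPoly_of_dvd hcop φ hroot hgdvd) (by rwa [natDegree_map]) hroot
    (fun h ↦ hgX (h.of_map φ.injective)) fun y z hy hz hyx hzx ↦ ?_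
  obtain ⟨σ, hσx, hσy⟩ := htrans y z hy hz hyx hzx
  have hσφ : σ.comp φ = φ := ratFunc_algHom_ext hσx
  refine ⟨σ, ?_, hσy⟩
  rw [Polynomial.map_map]
  exact congrArg (fun ψ : RatFunc K →ₐ[K] L ↦ g.map (ψ : RatFunc K →+* L)) hσφ

theorem natSepDegree_add_one_of_two_transitive (hcop : IsCoprime p q)
    (hdeg : max p.natDegree q.natDegree ≠ 0) {F : (RatFunc K)[X]}
    (hF : F = fiberPoly p q RatFunc.X 1)
    (h2 : MulAction.IsMultiplyPretransitive F.Gal (F.rootSet F.SplittingField) 2)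
    {g : (RatFunc K)[X]} (hg : g.natDegree ≠ 0) (hgX : ¬ g.IsRoot RatFunc.X)
    (hgdvd : g ∣ fiberPoly p q (aeval RatFunc.X p) (aeval RatFunc.X q)) :
    g.natSepDegree + 1 = F.natSepDegree := by
  set L := F.SplittingField
  set u : L := algebraMap (RatFunc K) L RatFunc.X
  have hu : Transcendental K u :=
    (transcendental_algebraMap_iff (algebraMap (RatFunc K) L).injective).mpr
      RatFunc.transcendental_X
  have hFL : F.map (algebraMap (RatFunc K) L) = fiberPoly p q u 1 := by
    simpa [hF] using
      map_fiberPoly (p := p) (q := q) (IsScalarTower.toAlgHom K (RatFunc K) L) RatFunc.X 1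
  have hnat : (fiberPoly p q u 1).natDegree ≠ 0 := by
    rwa [natDegree_fiberPoly_one_of_transcendental hu]
  have hne : fiberPoly p q u 1 ≠ 0 := ne_zero_of_natDegree_gt (Nat.pos_of_ne_zero hnat)
  have hsplits : (fiberPoly p q u 1).Splits := hFL ▸ SplittingField.splits F
  have hmem {y : L} (hy : (fiberPoly p q u 1).IsRoot y) : y ∈ F.rootSet L := by
    rwa [mem_rootSet', hFL, ← eval_map_algebraMap, hFL, and_iff_right hne]
  obtain ⟨x, hx⟩ : ∃ x, (fiberPoly p q u 1).IsRoot x :=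
    hsplits.exists_eval_eq_zero fun h0 ↦ hnat (natDegree_eq_of_degree_eq_some h0)
  obtain ⟨φ, rfl⟩ := exists_ratFunc_algHom_X_eq (transcendental_of_isRoot_fiberPoly hcop hu hx)
  rw [← natSepDegree_map _ F (algebraMap _ L), hFL]
  refine natSepDegree_add_one_of_stabilizer_transitive hcop φ hne hsplits hx
    (fun y z hy hz hyx hzx ↦ ?_) hg hgX hgdvd
  obtain ⟨σ, hσx, hσy⟩ := exists_gal_of_two_transitive h2 (hmem hx) (hmem hy) (hmem hz) hyx hzx
  exact ⟨σ.toAlgHom.restrictScalars K, hσx, hσy⟩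

theorem stmt_8_general (ℓ : ℕ) [ExpChar K ℓ] (hcop : IsCoprime p q)
    (hdeg : max p.natDegree q.natDegree ≠ 0) {F : (RatFunc K)[X]}
    (hF : F = fiberPoly p q RatFunc.X 1) {g : (RatFunc K)[X]} (hg : Irreducible g)
    (hgX : ¬ g.IsRoot RatFunc.X)
    (hgdvd : g ∣ fiberPoly p q (aeval RatFunc.X p) (aeval RatFunc.X q))
    (hgdeg : ∀ s n : ℕ, (s + 1) * ℓ ^ n = max p.natDegree q.natDegree → ¬ s ∣ g.natDegree) :
    ¬ MulAction.IsMultiplyPretransitive F.Gal (F.rootSet F.SplittingField) 2 := by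
  intro h2
  have hsep : g.natSepDegree + 1 = F.natSepDegree :=
    natSepDegree_add_one_of_two_transitive hcop hdeg hF h2 hg.natDegree_pos.ne' hgX hgdvd
  have hFsep : HasSeparableContraction ℓ F :=
    (hF ▸ irreducible_fiberPoly_ratFuncX hcop hdeg).hasSeparableContraction ℓ
  obtain ⟨n, hn⟩ := hFsep.dvd_degree'
  refine hgdeg g.natSepDegree n ?_ hg.natSepDegree_dvd_natDegree
  rw [hsep, hFsep.natSepDegree_eq, hn, hF,
    natDegree_fiberPoly_one_of_transcendental RatFunc.transcendental_X]

end TwoTransitive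

theorem eq_of_prime_dvd_pow_of_prime_or_one {ℓ n r s : ℕ} (hℓ : ℓ.Prime ∨ ℓ = 1) (hr : r.Prime)
    (hs : s.Prime) (hrℓ : r ∣ ℓ ^ n) (hsℓ : s ∣ ℓ ^ n) : r = s := by
  obtain hℓ | rfl := hℓ
  · exact ((Nat.prime_dvd_prime_iff_eq hr hℓ).mp (hr.dvd_of_dvd_pow hrℓ)).trans
      ((Nat.prime_dvd_prime_iff_eq hs hℓ).mp (hs.dvd_of_dvd_pow hsℓ)).symm
  · exact absurd (one_pow (M := ℕ) n ▸ hrℓ) hr.not_dvd_one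

theorem not_dvd_36_of_succ_mul_prime_pow_eq_280 {ℓ : ℕ} (hℓ : ℓ.Prime ∨ ℓ = 1) (s n : ℕ)
    (h : (s + 1) * ℓ ^ n = 280) : ¬ s ∣ 36 := by
  intro hs
  have hcofactor : 2 ∣ ℓ ^ n ∧ (5 ∣ ℓ ^ n ∨ 7 ∣ ℓ ^ n) := by
    have hle : s ≤ 36 := Nat.le_of_dvd (by norm_num) hs
    generalize ℓ ^ n = m at h
    interval_cases s <;> omega
  obtain ⟨h2, h5 | h7⟩ := hcofactor
  · have h25 := eq_of_prime_dvd_pow_of_prime_or_one hℓ Nat.prime_two Nat.prime_five h2 h5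
    omega
  · have h27 := eq_of_prime_dvd_pow_of_prime_or_one hℓ Nat.prime_two Nat.prime_seven h2 h7
    omega

/-- Let `f = p/q` be a rational function of degree 280 over `K` and let
`A = Gal(p(X) - t·q(X) / K(t))` act on the roots. If
`p(t)·q(X) - p(X)·q(t)` has an irreducible factor of degree 36 over `K(t)`
(in particular one other than `X - t`), then `A` is not 2-transitive. -/
theorem stmt_8 (K : Type*) [Field K] (p q : K[X])
    (hp : p.natDegree = 280) (hq : q.natDegree < 280) (hcop : IsCoprime p q)
    -- `F = p(X) - t·q(X)` over `K(t)`
    (F : (RatFunc K)[X])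
    (hF : F = p.map (algebraMap K (RatFunc K)) -
      C RatFunc.X * q.map (algebraMap K (RatFunc K)))
    -- `Φ = p(t)·q(X) - p(X)·q(t)` over `K(t)`
    (Φ : (RatFunc K)[X])
    (hΦ : Φ = C (p.eval₂ (algebraMap K (RatFunc K)) RatFunc.X) *
        q.map (algebraMap K (RatFunc K)) -
      p.map (algebraMap K (RatFunc K)) *
        C (q.eval₂ (algebraMap K (RatFunc K)) RatFunc.X))
    (g : (RatFunc K)[X]) (hg : Irreducible g) (hgΦ : g ∣ Φ)
    (hgdeg : g.natDegree = 36) :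
    ¬ (∀ a b c d : F.rootSet F.SplittingField, a ≠ b → c ≠ d →
        ∃ σ : F.Gal, σ • a = c ∧ σ • b = d) := by
  obtain ⟨ℓ, _⟩ := ExpChar.exists K
  have hmax : max p.natDegree q.natDegree = 280 := by omega
  have hFfib : F = fiberPoly p q RatFunc.X 1 := by simp [hF, fiberPoly]
  have hΦfib : Φ = -fiberPoly p q (aeval RatFunc.X p) (aeval RatFunc.X q) := by
    rw [hΦ, fiberPoly, aeval_def, aeval_def]
    ring
  have hgX : ¬ g.IsRoot RatFunc.X := fun hroot ↦ by
    have hlin : g.natDegree = 1 :=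
      natDegree_eq_of_degree_eq_some (degree_eq_one_of_irreducible_of_root hg hroot)
    omega
  have harith (s n : ℕ) : (s + 1) * ℓ ^ n = max p.natDegree q.natDegree → ¬ s ∣ g.natDegree := by
    rw [hmax, hgdeg]
    exact not_dvd_36_of_succ_mul_prime_pow_eq_280 (expChar_is_prime_or_one K ℓ) s n
  have hnot := stmt_8_general ℓ hcop (by rw [hmax]; decide) hFfib hg hgX
    (dvd_neg.mp (hΦfib ▸ hgΦ)) harith
  exact fun H ↦ hnot (MulAction.is_two_pretransitive_iff.mpr (H _ _ _ _))
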